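/- arXiv:2305.05619 — 8 statements merged into one kernel-verified Lean document; each statement's English description precedes it below -/
import Mathlib

section
/- Let n ≥ 1 and let I be a nonempty subset of Fin (n+1). Then the subset {x ∈ S^n : for every i ∈ I and every index j, |x j| ≤ x i} of the unit sphere S^n is homeomorphic (with the subspace topology) to the cube [-1,1]^{n+1-|I|}, i.e. to the space of functions Fin (n+1-|I|) → Set.Icc (-1:ℝ) 1 with the product topology. -/
/-- The point of the face of the cube with coordinates `c` off `I` and `1` on `I`. -/
noncomputable def cubeVec {m k : ℕ} (I : Finset (Fin m)) (e : Fin k ≃ {j : Fin m // j ∉ I})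
    (c : Fin k → ℝ) : EuclideanSpace ℝ (Fin m) :=
  WithLp.toLp 2 (fun j => if h : j ∈ I then 1 else c (e.symm ⟨j, h⟩))

lemma cubeVec_mem {m k : ℕ} (I : Finset (Fin m)) (e : Fin k ≃ {j : Fin m // j ∉ I})
    (c : Fin k → ℝ) {j : Fin m} (h : j ∈ I) : cubeVec I e c j = 1 := by
  simp [cubeVec, h]

lemma cubeVec_not_mem {m k : ℕ} (I : Finset (Fin m)) (e : Fin k ≃ {j : Fin m // j ∉ I})
    (c : Fin k → ℝ) {j : Fin m} (h : j ∉ I) : cubeVec I e c j = c (e.symm ⟨j, h⟩) := by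
  simp [cubeVec, h]

lemma cubeVec_continuous {m k : ℕ} (I : Finset (Fin m)) (e : Fin k ≃ {j : Fin m // j ∉ I}) :
    Continuous (cubeVec I e) := by
  unfold cubeVec
  refine (PiLp.continuous_toLp 2 _).comp (continuous_pi fun j => ?_)
  by_cases h : j ∈ I
  · simp only [h, dite_true]; exact continuous_const
  · simp only [h, dite_false]; exact continuous_apply _

lemma cubeVec_norm_pos {m k : ℕ} (I : Finset (Fin m)) (hI : I.Nonempty)
    (e : Fin k ≃ {j : Fin m // j ∉ I}) (c : Fin k → ℝ) : 0 < ‖cubeVec I e c‖ := by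
  obtain ⟨i, hi⟩ := hI
  rw [norm_pos_iff]
  intro h
  have h1 := cubeVec_mem I e c hi
  rw [h] at h1
  simp at h1

lemma sheet_pos {m : ℕ} {i : Fin m} {x : EuclideanSpace ℝ (Fin m)}
    (hx : ‖x‖ = 1) (h : ∀ j, |x j| ≤ x i) : 0 < x i := by
  by_contra hn
  have : x = 0 := by
    ext j
    have := h j
    have h2 := abs_nonneg (x j)
    exact abs_eq_zero.1 (by linarith)
  simp [this] at hx

/-- One "sheet" of the intersection of the pieces of the good ball decomposition of
`ℝP^n` lifted to the sphere: the subset of the unit sphere `S^n ⊂ ℝ^{n+1}` consisting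
of points `x` with `|x j| ≤ x i` for all `i ∈ I` and all `j` is homeomorphic to the
cube `[-1,1]^{n+1-|I|}`. -/
theorem sheet_homeo_cube (n : ℕ) (hn : 1 ≤ n) (I : Finset (Fin (n + 1))) (hI : I.Nonempty) :
    Nonempty
      ({x : EuclideanSpace ℝ (Fin (n + 1)) //
          x ∈ Metric.sphere (0 : EuclideanSpace ℝ (Fin (n + 1))) 1 ∧
            ∀ i ∈ I, ∀ j, |x j| ≤ x i} ≃ₜ
        (Fin (n + 1 - I.card) → Set.Icc (-1 : ℝ) 1)) := by
  classical
  obtain ⟨i0, hi0⟩ := id hI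
  have hc : Fintype.card {j : Fin (n + 1) // j ∉ I} = n + 1 - I.card := by
    simp [Fintype.card_subtype_compl]
  let e : Fin (n + 1 - I.card) ≃ {j : Fin (n + 1) // j ∉ I} :=
    (Fintype.equivFinOfCardEq hc).symm
  refine ⟨{
    toFun := fun x k => ⟨x.1 (e k) / x.1 i0, ?_⟩
    invFun := fun c => ⟨‖cubeVec I e (fun k => (c k : ℝ))‖⁻¹ • cubeVec I e (fun k => (c k : ℝ)), ?_, ?_⟩
    left_inv := ?_
    right_inv := ?_
    continuous_toFun := ?_
    continuous_invFun := ?_ }⟩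
  · have hp := sheet_pos (mem_sphere_zero_iff_norm.1 x.2.1) (x.2.2 i0 hi0)
    have := abs_le.1 (x.2.2 i0 hi0 (e k))
    rw [Set.mem_Icc, le_div_iff₀ hp, div_le_iff₀ hp]
    constructor <;> linarith [this.1, this.2]
  · have hp := cubeVec_norm_pos I hI e (fun k => (c k : ℝ))
    rw [mem_sphere_zero_iff_norm, norm_smul, norm_inv, norm_norm, inv_mul_cancel₀ hp.ne']
  · intro i hi j
    have hp := cubeVec_norm_pos I hI e (fun k => (c k : ℝ))
    rw [PiLp.smul_apply, PiLp.smul_apply, smul_eq_mul, smul_eq_mul, abs_mul,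
      abs_of_pos (inv_pos.2 hp)]
    refine mul_le_mul_of_nonneg_left ?_ (inv_pos.2 hp).le
    rw [cubeVec_mem I e _ hi]
    by_cases hj : j ∈ I
    · rw [cubeVec_mem I e _ hj]; simp
    · rw [cubeVec_not_mem I e _ hj]
      exact abs_le.2 (c _).2
  · intro x
    apply Subtype.ext
    have hx := mem_sphere_zero_iff_norm.1 x.2.1
    have hp := sheet_pos hx (x.2.2 i0 hi0)
    have hv : cubeVec I e (fun k => x.1 (e k) / x.1 i0) = (x.1 i0)⁻¹ • x.1 := by
      ext j
      rw [PiLp.smul_apply, smul_eq_mul]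
      by_cases hj : j ∈ I
      · rw [cubeVec_mem I e _ hj]
        have h1 := (le_abs_self _).trans (x.2.2 i0 hi0 j)
        have h2 := (le_abs_self _).trans (x.2.2 j hj i0)
        rw [le_antisymm h1 h2, inv_mul_cancel₀ hp.ne']
      · rw [cubeVec_not_mem I e _ hj]
        simp [div_eq_inv_mul]
    change ‖cubeVec I e (fun k => x.1 (e k) / x.1 i0)‖⁻¹ •
      cubeVec I e (fun k => x.1 (e k) / x.1 i0) = x.1
    rw [hv, norm_smul, hx, norm_inv, Real.norm_of_nonneg hp.le, mul_one, inv_inv, smul_smul,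
      mul_inv_cancel₀ hp.ne', one_smul]
  · intro c
    funext k
    apply Subtype.ext
    have hp := cubeVec_norm_pos I hI e (fun k => (c k : ℝ))
    change (‖cubeVec I e (fun k => (c k : ℝ))‖⁻¹ • cubeVec I e (fun k => (c k : ℝ))) (e k) /
      (‖cubeVec I e (fun k => (c k : ℝ))‖⁻¹ • cubeVec I e (fun k => (c k : ℝ))) i0 = c k
    rw [PiLp.smul_apply, PiLp.smul_apply, smul_eq_mul, smul_eq_mul,
      mul_div_mul_left _ _ (inv_pos.2 hp).ne', cubeVec_mem I e _ hi0,
      cubeVec_not_mem I e _ (e k).2]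
    simp
  · refine continuous_pi fun k => Continuous.subtype_mk (Continuous.div ?_ ?_ ?_) _
    · fun_prop
    · fun_prop
    · intro x
      exact (sheet_pos (mem_sphere_zero_iff_norm.1 x.2.1) (x.2.2 i0 hi0)).ne'
  · have h : Continuous fun c : Fin (n + 1 - I.card) → Set.Icc (-1 : ℝ) 1 =>
        cubeVec I e (fun k => (c k : ℝ)) := (cubeVec_continuous I e).comp (by fun_prop)
    exact Continuous.subtype_mk
      ((h.norm.inv₀ fun c => (cubeVec_norm_pos I hI e _).ne').smul h) _
end

section
/- Let n ≥ 1. For i ∈ Fin (n+1) let B_i = {x ∈ S^n : |x j| ≤ |x i| for all j}. Then: (1) each B_i is closed and the B_i cover S^n; (2) for every nonempty subset I ⊆ Fin (n+1) with |I| = k, the intersection ⋂_{i∈I} B_i = {x ∈ S^n : for all i ∈ I and all j, |x j| ≤ |x i|} is homeomorphic to Fin (2^k) × [-1,1]^{n+1-k}, i.e. to a disjoint union of 2^k cubes of dimension n+1−k. In particular, for |I| = n+1 the intersection of all the B_i consists of exactly 2^{n+1} points. -/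
noncomputable def gbV {n : ℕ} (I : Finset (Fin (n + 1)))
    (p : ({i // i ∈ I} → Bool) × ({i // i ∉ I} → Set.Icc (-1 : ℝ) 1)) :
    EuclideanSpace ℝ (Fin (n + 1)) :=
  WithLp.toLp 2 (fun i => if h : i ∈ I then (if p.1 ⟨i, h⟩ then (1 : ℝ) else -1)
    else ((p.2 ⟨i, h⟩ : Set.Icc (-1 : ℝ) 1) : ℝ))

theorem gbV_mem {n : ℕ} (I : Finset (Fin (n + 1)))
    (p : ({i // i ∈ I} → Bool) × ({i // i ∉ I} → Set.Icc (-1 : ℝ) 1)) (i : Fin (n + 1))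
    (h : i ∈ I) : gbV I p i = if p.1 ⟨i, h⟩ then (1 : ℝ) else -1 := by
  simp [gbV, h]

theorem gbV_not_mem {n : ℕ} (I : Finset (Fin (n + 1)))
    (p : ({i // i ∈ I} → Bool) × ({i // i ∉ I} → Set.Icc (-1 : ℝ) 1)) (i : Fin (n + 1))
    (h : i ∉ I) : gbV I p i = ((p.2 ⟨i, h⟩ : Set.Icc (-1 : ℝ) 1) : ℝ) := by
  simp [gbV, h]

theorem gbV_abs_mem {n : ℕ} (I : Finset (Fin (n + 1)))
    (p : ({i // i ∈ I} → Bool) × ({i // i ∉ I} → Set.Icc (-1 : ℝ) 1)) (i : Fin (n + 1))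
    (h : i ∈ I) : |gbV I p i| = 1 := by
  rw [gbV_mem I p i h]; split_ifs <;> simp

theorem gbV_abs_le {n : ℕ} (I : Finset (Fin (n + 1)))
    (p : ({i // i ∈ I} → Bool) × ({i // i ∉ I} → Set.Icc (-1 : ℝ) 1)) (i : Fin (n + 1)) :
    |gbV I p i| ≤ 1 := by
  by_cases h : i ∈ I
  · exact (gbV_abs_mem I p i h).le
  · rw [gbV_not_mem I p i h]
    exact abs_le.2 (p.2 ⟨i, h⟩).2

theorem gbV_continuous {n : ℕ} (I : Finset (Fin (n + 1))) : Continuous (gbV I) := by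
  unfold gbV
  refine (PiLp.continuous_toLp 2 _).comp (continuous_pi fun i => ?_)
  by_cases h : i ∈ I
  · simp only [h, dif_pos]
    exact (continuous_of_discreteTopology (f := fun b : Bool => if b then (1 : ℝ) else -1)).comp
      ((continuous_apply _).comp continuous_fst)
  · simp only [h, dif_neg, not_false_eq_true]
    exact continuous_subtype_val.comp ((continuous_apply _).comp continuous_snd)

theorem gbV_inj {n : ℕ} (I : Finset (Fin (n + 1))) : Function.Injective (gbV I) := by
  intro p q h
  refine Prod.ext (funext fun i => ?_) (funext fun i => Subtype.ext ?_)
  · have := congrArg (fun v => v i.1) h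
    simp only [gbV_mem I _ i.1 i.2] at this
    revert this
    cases p.1 ⟨i.1, i.2⟩ <;> cases q.1 ⟨i.1, i.2⟩ <;> norm_num
  · have := congrArg (fun v => v i.1) h
    simpa only [gbV_not_mem I _ i.1 i.2] using this

theorem gbV_ne {n : ℕ} (I : Finset (Fin (n + 1))) (hI : I.Nonempty)
    (p : ({i // i ∈ I} → Bool) × ({i // i ∉ I} → Set.Icc (-1 : ℝ) 1)) : gbV I p ≠ 0 := by
  obtain ⟨i, hi⟩ := hI
  intro h
  have := gbV_abs_mem I p i hi
  rw [h] at this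
  simp at this

theorem gb_homeo {n : ℕ} (I : Finset (Fin (n + 1))) (hI : I.Nonempty)
    (X : Set (EuclideanSpace ℝ (Fin (n + 1))))
    (hX : ∀ x, x ∈ X ↔ ‖x‖ = 1 ∧ ∀ i ∈ I, ∀ j, |x j| ≤ |x i|) :
    Nonempty (X ≃ₜ (({i // i ∈ I} → Bool) × ({i // i ∉ I} → Set.Icc (-1 : ℝ) 1))) := by
  have hpos : ∀ p, 0 < ‖gbV I p‖ := fun p => norm_pos_iff.2 (gbV_ne I hI p)
  have hmem : ∀ p, ‖gbV I p‖⁻¹ • gbV I p ∈ X := by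
    intro p
    rw [hX]
    refine ⟨?_, fun i hi j => ?_⟩
    · rw [norm_smul, norm_inv, norm_norm, inv_mul_cancel₀ (hpos p).ne']
    · simp only [PiLp.smul_apply, smul_eq_mul, abs_mul, gbV_abs_mem I p i hi]
      exact mul_le_mul_of_nonneg_left (gbV_abs_le I p j) (abs_nonneg _)
  let F : (({i // i ∈ I} → Bool) × ({i // i ∉ I} → Set.Icc (-1 : ℝ) 1)) → X :=
    fun p => ⟨‖gbV I p‖⁻¹ • gbV I p, hmem p⟩
  have hF : Continuous F := by
    refine Continuous.subtype_mk ?_ _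
    exact ((gbV_continuous I).norm.inv₀ fun p => (hpos p).ne').smul (gbV_continuous I)
  obtain ⟨i₀, hi₀⟩ := hI
  have hbij : Function.Bijective F := by
    constructor
    · intro p q h
      have h1 : ‖gbV I p‖⁻¹ • gbV I p = ‖gbV I q‖⁻¹ • gbV I q := congrArg Subtype.val h
      have h2 := congrArg (fun v => |v i₀|) h1
      simp only [PiLp.smul_apply, smul_eq_mul, abs_mul, gbV_abs_mem I _ i₀ hi₀, mul_one,
        abs_inv, abs_norm] at h2
      rw [h2] at h1
      exact gbV_inj I (smul_right_injective _ (inv_pos.2 (hpos q)).ne' h1)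
    · rintro ⟨x, hx⟩
      obtain ⟨hx1, hx2⟩ := (hX x).1 hx
      have hc : 0 < |x i₀| := by
        by_contra hc
        have h0 : x = 0 := by
          ext j
          have := hx2 i₀ hi₀ j
          have h3 := abs_nonneg (x j)
          exact abs_eq_zero.1 (by linarith)
        rw [h0] at hx1
        simp at hx1
      have hb : ∀ j, |x j / (|x i₀|)| ≤ 1 := fun j => by
        rw [abs_div, abs_abs]
        exact (div_le_one hc).2 (hx2 i₀ hi₀ j)
      refine ⟨(fun i => decide (0 < x i.1), fun j => ⟨x j.1 / |x i₀|, abs_le.1 (hb j.1)⟩), ?_⟩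
      have hv : gbV I (fun i => decide (0 < x i.1),
          fun j => ⟨x j.1 / |x i₀|, abs_le.1 (hb j.1)⟩) = |x i₀|⁻¹ • x := by
        ext j
        by_cases hj : j ∈ I
        · rw [gbV_mem I _ j hj]
          have he : |x i₀| = |x j| := le_antisymm (hx2 j hj i₀) (hx2 i₀ hi₀ j)
          simp only [PiLp.smul_apply, smul_eq_mul, decide_eq_true_eq]
          rw [he] at hc ⊢
          split_ifs with h
          · rw [abs_of_pos h, inv_mul_cancel₀ h.ne']
          · have h' : x j < 0 := lt_of_le_of_ne (not_lt.1 h) (abs_pos.1 hc)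
            rw [abs_of_neg h']
            rw [inv_neg, neg_mul, inv_mul_cancel₀ h'.ne]
        · rw [gbV_not_mem I _ j hj]
          simp only [PiLp.smul_apply, smul_eq_mul]
          rw [div_eq_inv_mul]
      apply Subtype.ext
      change ‖gbV I _‖⁻¹ • gbV I _ = x
      rw [hv, norm_smul, hx1, norm_inv, Real.norm_eq_abs, abs_abs, mul_one, inv_inv, smul_smul,
        mul_inv_cancel₀ hc.ne', one_smul]
  have hF' : Continuous (Equiv.ofBijective F hbij) := hF
  exact ⟨(hF'.homeoOfEquivCompactToT2).symm⟩

theorem gb_homeo' {n : ℕ} (I : Finset (Fin (n + 1))) (hI : I.Nonempty)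
    (X : Set (EuclideanSpace ℝ (Fin (n + 1))))
    (hX : ∀ x, x ∈ X ↔ ‖x‖ = 1 ∧ ∀ i ∈ I, ∀ j, |x j| ≤ |x i|) :
    Nonempty (X ≃ₜ (Fin (2 ^ I.card) × (Fin (n + 1 - I.card) → Set.Icc (-1 : ℝ) 1))) := by
  obtain ⟨e⟩ := gb_homeo I hI X hX
  have e1 : ({i // i ∈ I} → Bool) ≃ Fin (2 ^ I.card) :=
    Fintype.equivFinOfCardEq (by simp)
  have e2 : {i // i ∉ I} ≃ Fin (n + 1 - I.card) :=
    Fintype.equivFinOfCardEq (by simp [Fintype.card_subtype_compl])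
  have h1 : ({i // i ∈ I} → Bool) ≃ₜ Fin (2 ^ I.card) := 
    { e1 with
      continuous_toFun := continuous_of_discreteTopology
      continuous_invFun := continuous_of_discreteTopology }
  exact ⟨e.trans (h1.prodCongr (Homeomorph.piCongrLeft (Y := fun _ => Set.Icc (-1 : ℝ) 1) e2))⟩

/-- The pieces `B i = {x ∈ S^n : ∀ j, |x j| ≤ |x i|}` of the lift to `S^n` of the
good ball decomposition of `ℝP^n`: each is closed, they cover the sphere, every
intersection over a nonempty index set `I` of cardinality `k` is homeomorphic to a
disjoint union of `2^k` cubes of dimension `n+1-k`, and in particular the total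
intersection consists of exactly `2^(n+1)` points. -/
theorem goodBallPieces_sphere (n : ℕ) (hn : 1 ≤ n)
    (B : Fin (n + 1) → Set (EuclideanSpace ℝ (Fin (n + 1))))
    (hB : ∀ i, B i = {x | x ∈ Metric.sphere (0 : EuclideanSpace ℝ (Fin (n + 1))) 1 ∧
        ∀ j, |x j| ≤ |x i|}) :
    (∀ i, IsClosed (B i)) ∧
    (⋃ i, B i) = Metric.sphere (0 : EuclideanSpace ℝ (Fin (n + 1))) 1 ∧
    (∀ I : Finset (Fin (n + 1)), I.Nonempty →
      Nonempty ((⋂ i ∈ I, B i) ≃ₜ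
        (Fin (2 ^ I.card) × (Fin (n + 1 - I.card) → Set.Icc (-1 : ℝ) 1)))) ∧
    Set.ncard (⋂ i, B i) = 2 ^ (n + 1) := by
  have hI : ∀ I : Finset (Fin (n + 1)), I.Nonempty → ∀ x, x ∈ (⋂ i ∈ I, B i) ↔
      ‖x‖ = 1 ∧ ∀ i ∈ I, ∀ j, |x j| ≤ |x i| := by
    intro I ⟨i₀, hi₀⟩ x
    simp only [hB, Set.mem_iInter, Set.mem_ofPred_eq, mem_sphere_zero_iff_norm]
    exact ⟨fun h => ⟨(h i₀ hi₀).1, fun i hi => (h i hi).2⟩, fun h i hi => ⟨h.1, h.2 i hi⟩⟩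
  refine ⟨fun i => ?_, ?_, fun I h => gb_homeo' I h _ (hI I h), ?_⟩
  · rw [hB]
    have h2 : IsClosed (⋂ j, {x : EuclideanSpace ℝ (Fin (n + 1)) | |x j| ≤ |x i|}) :=
      isClosed_iInter fun j => isClosed_le (by fun_prop) (by fun_prop)
    have h3 := (Metric.isClosed_sphere
      (x := (0 : EuclideanSpace ℝ (Fin (n + 1)))) (ε := 1)).inter h2
    have h4 : {x | x ∈ Metric.sphere (0 : EuclideanSpace ℝ (Fin (n + 1))) 1 ∧
        ∀ j, |x j| ≤ |x i|} = Metric.sphere (0 : EuclideanSpace ℝ (Fin (n + 1))) 1 ∩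
        ⋂ j, {x : EuclideanSpace ℝ (Fin (n + 1)) | |x j| ≤ |x i|} := by
      ext x
      simp
    rw [h4]
    exact h3
  · ext x
    simp only [hB, Set.mem_iUnion, Set.mem_ofPred_eq]
    refine ⟨fun ⟨i, h⟩ => h.1, fun h => ?_⟩
    obtain ⟨i, hi⟩ := Finite.exists_max (fun j => |x j|)
    exact ⟨i, h, hi⟩
  · obtain ⟨e⟩ := gb_homeo' Finset.univ Finset.univ_nonempty _ (hI _ Finset.univ_nonempty)
    have h := Nat.card_congr e.toEquiv
    have hu : (⋂ i, B i) = ⋂ i ∈ (Finset.univ : Finset (Fin (n + 1))), B i := by simp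
    rw [hu, ← Nat.card_coe_set_eq, h, Nat.card_prod, Nat.card_fin, Finset.card_univ,
      Fintype.card_fin, Nat.sub_self]
    simp
end

section
/- For every n ≥ 0, the set of one-dimensional ℝ-linear subspaces L of (Fin (n+1) → ℝ) such that L is spanned by some nonzero vector v with |v i| = |v j| for all indices i, j, has exactly 2^n elements. -/
/-- The sign vector with first coordinate `1`. -/
def signVec (n : ℕ) (s : Fin n → Bool) : Fin (n + 1) → ℝ :=
  Fin.cons 1 (fun i => if s i then 1 else -1)

lemma signVec_zero (n : ℕ) (s : Fin n → Bool) : signVec n s 0 = 1 := by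
  simp [signVec]

lemma signVec_succ (n : ℕ) (s : Fin n → Bool) (i : Fin n) :
    signVec n s i.succ = if s i then 1 else -1 := by
  simp [signVec]

lemma signVec_ne (n : ℕ) (s : Fin n → Bool) : signVec n s ≠ 0 := by
  intro h
  have := congrFun h 0
  rw [signVec_zero] at this
  simp at this

lemma signVec_abs (n : ℕ) (s : Fin n → Bool) (i : Fin (n + 1)) : |signVec n s i| = 1 := by
  refine Fin.cases ?_ (fun i => ?_) i
  · rw [signVec_zero]; simp
  · rw [signVec_succ]; split_ifs <;> simp

lemma signVec_span_inj (n : ℕ) :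
    Function.Injective (fun s : Fin n → Bool => Submodule.span ℝ {signVec n s}) := by
  intro s t h
  have h1 : signVec n s ∈ Submodule.span ℝ {signVec n t} := by
    have h' : Submodule.span ℝ {signVec n s} = Submodule.span ℝ {signVec n t} := h
    rw [← h']
    exact Submodule.mem_span_singleton_self _
  obtain ⟨c, hc⟩ := Submodule.mem_span_singleton.1 h1
  have h0 := congrFun hc 0
  rw [Pi.smul_apply, signVec_zero, signVec_zero, smul_eq_mul, mul_one] at h0
  subst h0
  funext i
  have hi := congrFun hc i.succ
  rw [one_smul, signVec_succ, signVec_succ] at hi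
  cases hs : s i <;> cases ht : t i <;> simp [hs, ht] at hi ⊢ <;> norm_num at hi

/-- In the good ball decomposition of `ℝP^n` by
`M i = {[x₀ : … : xₙ] : |x_i| ≥ |x_j| for all j}`, the intersection of all the
pieces — the set of lines in `ℝ^{n+1}` spanned by a nonzero vector all of whose
coordinates have the same absolute value — has exactly `2^n` elements. -/
theorem card_equalAbs_lines (n : ℕ) :
    Set.ncard {L : Submodule ℝ (Fin (n + 1) → ℝ) |
        Module.finrank ℝ L = 1 ∧
        ∃ v : Fin (n + 1) → ℝ, v ≠ 0 ∧ (∀ i j, |v i| = |v j|) ∧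
          L = Submodule.span ℝ {v}} = 2 ^ n := by
  have key : {L : Submodule ℝ (Fin (n + 1) → ℝ) |
        Module.finrank ℝ L = 1 ∧
        ∃ v : Fin (n + 1) → ℝ, v ≠ 0 ∧ (∀ i j, |v i| = |v j|) ∧
          L = Submodule.span ℝ {v}} =
      Set.range (fun s : Fin n → Bool => Submodule.span ℝ {signVec n s}) := by
    ext L
    constructor
    · rintro ⟨-, v, hv, habs, rfl⟩
      have h0 : v 0 ≠ 0 := by
        intro h
        apply hv
        funext i
        have := habs i 0
        rw [h, abs_zero, abs_eq_zero] at this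
        exact this
      refine ⟨fun i => decide (v i.succ = v 0), ?_⟩
      have hv' : v = v 0 • signVec n (fun i => decide (v i.succ = v 0)) := by
        funext i
        refine Fin.cases ?_ (fun i => ?_) i
        · rw [Pi.smul_apply, signVec_zero]; simp
        · rw [Pi.smul_apply, signVec_succ]
          by_cases h : v i.succ = v 0
          · simp [h]
          · have := (abs_eq_abs.1 (habs i.succ 0)).resolve_left h
            simp only [h, decide_false, smul_eq_mul]
            simp [this]
      change Submodule.span ℝ {signVec n (fun i => decide (v i.succ = v 0))} = _
      conv_rhs => rw [hv']
      exact (Submodule.span_singleton_smul_eq (IsUnit.mk0 _ h0) _).symm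
    · rintro ⟨s, rfl⟩
      refine ⟨finrank_span_singleton (signVec_ne n s), signVec n s, signVec_ne n s, ?_, rfl⟩
      intro i j
      rw [signVec_abs, signVec_abs]
  rw [key, ← Nat.card_coe_set_eq, Nat.card_range_of_injective (signVec_span_inj n)]
  simp
end

section
/- For every n ≥ 2 there exist closed subsets B_1, …, B_n of the unit sphere S^{n-1} ⊂ ℝ^n whose union is all of S^{n-1}, such that for every nonempty proper subset I ⊊ {1,…,n} the intersection ⋂_{i∈I} B_i is homeomorphic to the closed unit ball of the Euclidean space ℝ^{n-|I|}, and the total intersection ⋂_{i=1}^n B_i consists of exactly two points. -/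
namespace GBD

open scoped Classical in
/-- barycentric slack coordinates -/
noncomputable def yc {J : Type*} [Fintype J] (j0 : J) (u : EuclideanSpace ℝ J) (j : J) : ℝ :=
  if j = j0 then 1 - |u j0| - ∑ k ∈ Finset.univ.erase j0, u k else u j

/-- convex model -/
def C {J : Type*} [Fintype J] (j0 : J) : Set (EuclideanSpace ℝ J) :=
  {u | ∀ j, 0 ≤ yc j0 u j}

lemma yc_cont {J : Type*} [Fintype J] (j0 j : J) :
    Continuous (fun u : EuclideanSpace ℝ J => yc j0 u j) := by
  unfold yc
  split_ifs <;> fun_prop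

lemma yc_sum {J : Type*} [Fintype J] (j0 : J) (u : EuclideanSpace ℝ J) :
    |u j0| + ∑ j, yc j0 u j = 1 := by
  classical
  rw [← Finset.add_sum_erase _ _ (Finset.mem_univ j0)]
  have : ∑ x ∈ Finset.univ.erase j0, yc j0 u x = ∑ x ∈ Finset.univ.erase j0, u x := by
    apply Finset.sum_congr rfl
    intro x hx
    simp [yc, Finset.ne_of_mem_erase hx]
  rw [this]
  simp only [yc, if_true]
  have : ∀ (i1 i2 : DecidableEq J), ∑ k ∈ @Finset.erase _ i1 Finset.univ j0, u k =
    ∑ k ∈ @Finset.erase _ i2 Finset.univ j0, u k := by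
    intro i1 i2; congr!
  linarith [this (fun a b => Classical.propDecidable (a = b)) inferInstance]

lemma C_convex {J : Type*} [Fintype J] (j0 : J) : Convex ℝ (C j0) := by
  intro u hu v hv a b ha hb hab j
  have h1 := hu j
  have h2 := hv j
  unfold yc at *
  split_ifs at * with h
  · have e : ∀ k, (a • u + b • v) k = a * u k + b * v k := fun k => by simp
    simp only [e, Finset.sum_add_distrib, ← Finset.mul_sum]
    have h3 : |a * u j0 + b * v j0| ≤ a * |u j0| + b * |v j0| := by
      refine (abs_add_le _ _).trans ?_
      rw [abs_mul, abs_mul, abs_of_nonneg ha, abs_of_nonneg hb]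
    nlinarith [mul_nonneg ha h1, mul_nonneg hb h2]
  · simp only [PiLp.add_apply, PiLp.smul_apply, smul_eq_mul]
    positivity

lemma C_closed {J : Type*} [Fintype J] (j0 : J) : IsClosed (C j0) := by
  have : C j0 = ⋂ j, {u | 0 ≤ yc j0 u j} := by ext; simp [C]
  rw [this]
  exact isClosed_iInter fun j => isClosed_le continuous_const (yc_cont j0 j)

lemma C_bdd {J : Type*} [Fintype J] (j0 : J) : Bornology.IsBounded (C j0) := by
  rw [isBounded_iff_forall_norm_le]
  refine ⟨√(∑ j : J, 1), fun u hu => ?_⟩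
  rw [EuclideanSpace.norm_eq]
  apply Real.sqrt_le_sqrt
  apply Finset.sum_le_sum
  intro j _
  have h0 := yc_sum j0 u
  have hle : ∀ j, yc j0 u j ≤ ∑ j, yc j0 u j := fun j =>
    Finset.single_le_sum (fun i _ => hu i) (Finset.mem_univ j)
  have : |u j| ≤ 1 := by
    by_cases h : j = j0
    · subst h
      linarith [hu j, hle j]
    · have h2 := hle j
      have h3 := hu j
      simp only [yc, if_neg h] at h2 h3
      rw [abs_of_nonneg h3]
      have := abs_nonneg (u j0)
      simp only [yc] at h0
      linarith
  rw [Real.norm_eq_abs, sq_abs]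
  exact (sq_le_one_iff_abs_le_one _).2 this

lemma C_int {J : Type*} [Fintype J] (j0 : J) : (interior (C j0)).Nonempty := by
  classical
  have hO : IsOpen {u : EuclideanSpace ℝ J | ∀ j, 0 < yc j0 u j} := by
    have : {u : EuclideanSpace ℝ J | ∀ j, 0 < yc j0 u j} = ⋂ j, {u | 0 < yc j0 u j} := by
      ext; simp
    rw [this]
    exact isOpen_iInter_of_finite fun j => isOpen_lt continuous_const (yc_cont j0 j)
  have hs : {u : EuclideanSpace ℝ J | ∀ j, 0 < yc j0 u j} ⊆ C j0 := fun u hu j => (hu j).le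
  have hc : (0:ℝ) < Fintype.card J := by
    exact_mod_cast Fintype.card_pos_iff.2 ⟨j0⟩
  refine ⟨WithLp.toLp 2 (fun j => if j = j0 then 0 else 1 / (Fintype.card J : ℝ)),
    interior_maximal hs hO ?_⟩
  intro j
  unfold yc
  split_ifs with h
  · have : ∀ k ∈ Finset.univ.erase j0, (if k = j0 then 0 else 1 / (Fintype.card J : ℝ))
       = 1 / (Fintype.card J : ℝ) := fun k hk => by simp [Finset.ne_of_mem_erase hk]
    have h2 := Finset.sum_congr rfl this
    simp only [if_true, abs_zero]
    have h3 : ∑ k ∈ Finset.univ.erase j0, (1 / (Fintype.card J : ℝ)) < 1 := by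
      rw [Finset.sum_const, Finset.card_erase_of_mem (Finset.mem_univ _), nsmul_eq_mul,
        Finset.card_univ, Nat.cast_sub (Fintype.card_pos_iff.2 ⟨j0⟩)]
      rw [mul_one_div, div_lt_one hc]; simp
    rw [← h2] at h3
    have h4 : ∀ (i1 i2 : DecidableEq J) (f : J → ℝ), ∑ k ∈ @Finset.erase _ i1 Finset.univ j0, f k =
      ∑ k ∈ @Finset.erase _ i2 Finset.univ j0, f k := by
      intro i1 i2 f; congr!
    rw [h4 _ inferInstance]
    linarith
  · simp only [h, if_false]; positivity

lemma C_homeo {J : Type*} [Fintype J] (j0 : J) :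
    Nonempty (C j0 ≃ₜ Metric.closedBall (0 : EuclideanSpace ℝ J) 1) := by
  obtain ⟨e, -, h, -⟩ := exists_homeomorph_image_interior_closure_frontier_eq_unitBall
    (C_convex j0) (C_int j0) (C_bdd j0)
  rw [(C_closed j0).closure_eq] at h
  exact ⟨(e.image (C j0)).trans (Homeomorph.setCongr h)⟩

lemma ball_homeo {J : Type*} [Fintype J] (k : ℕ) (hk : Fintype.card J = k) :
    Nonempty (Metric.closedBall (0 : EuclideanSpace ℝ J) 1 ≃ₜ
      Metric.closedBall (0 : EuclideanSpace ℝ (Fin k)) 1) := by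
  let e := LinearIsometryEquiv.piLpCongrLeft 2 ℝ ℝ (Fintype.equivFinOfCardEq hk)
  refine ⟨(e.toHomeomorph.image _).trans (Homeomorph.setCongr ?_)⟩
  have := e.image_closedBall 0 1
  rw [map_zero] at this
  exact this

variable {n : ℕ}

/-- the pieces -/
def B (i : Fin n) : Set (EuclideanSpace ℝ (Fin n)) := {x | ‖x‖ = 1 ∧ ∀ k, x i ≤ x k}

/-- gauge -/
noncomputable def N (I : Finset (Fin n)) (i0 : Fin n) (x : EuclideanSpace ℝ (Fin n)) : ℝ :=
  |x i0| + ∑ j : {j // j ∉ I}, (x j - x i0)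

/-- parametrisation -/
noncomputable def g (I : Finset (Fin n)) (j0 : {j // j ∉ I}) (u : EuclideanSpace ℝ {j // j ∉ I}) :
    EuclideanSpace ℝ (Fin n) :=
  WithLp.toLp 2 fun i => if h : i ∉ I then u j0 + yc j0 u ⟨i, h⟩ else u j0

open scoped Classical in
/-- inverse parametrisation -/
noncomputable def h (I : Finset (Fin n)) (i0 : Fin n) (j0 : {j // j ∉ I})
    (x : EuclideanSpace ℝ (Fin n)) :
    EuclideanSpace ℝ {j // j ∉ I} :=
  WithLp.toLp 2 fun j => if j = j0 then x i0 / N I i0 x else (x j - x i0) / N I i0 x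

variable (I : Finset (Fin n)) (i0 : Fin n) (hi : i0 ∈ I) (j0 : {j // j ∉ I})

lemma g_cont : Continuous (g I j0) := by
  unfold g
  refine (PiLp.continuous_toLp 2 _).comp (continuous_pi fun i => ?_)
  split_ifs
  · fun_prop
  · exact Continuous.add (by fun_prop) (yc_cont j0 _)

lemma N_cont : Continuous (N I i0) := by
  unfold N; fun_prop

lemma N_smul (t : ℝ) (ht : 0 < t) (x) : N I i0 (t • x) = t * N I i0 x := by
  simp only [N, PiLp.smul_apply, smul_eq_mul, abs_mul, abs_of_pos ht, mul_add, Finset.mul_sum,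
    mul_sub]

lemma h_smul (t : ℝ) (ht : 0 < t) (x) : h I i0 j0 (t • x) = h I i0 j0 x := by
  ext j
  simp only [h, N_smul I i0 t ht]
  simp only [PiLp.smul_apply, smul_eq_mul, ← mul_sub]
  rw [mul_div_mul_left _ _ ht.ne', mul_div_mul_left _ _ ht.ne']

include hi in
lemma N_g (u) : N I i0 (g I j0 u) = 1 := by
  rw [← yc_sum j0 u]
  have e : g I j0 u i0 = u j0 := by simp [g, hi]
  have e2 : ∀ j : {j // j ∉ I}, g I j0 u j = u j0 + yc j0 u j := fun j => by simp [g, j.2]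
  simp only [N, e, e2, add_sub_cancel_left]

include hi in
lemma h_g (u) : h I i0 j0 (g I j0 u) = u := by
  ext j
  simp only [h, N_g I i0 hi j0]
  split_ifs with hj
  · simp [g, hi, hj]
  · simp [g, hi, j.2, yc, hj]

include hi in
lemma g_ne (u) : g I j0 u ≠ 0 := by
  intro h0
  have := N_g I i0 hi j0 u
  rw [h0] at this
  simp [N] at this

lemma memB {x : EuclideanSpace ℝ (Fin n)} (hi : i0 ∈ I) :
    x ∈ (⋂ i ∈ I, B i) ↔ ‖x‖ = 1 ∧ (∀ i ∈ I, x i = x i0) ∧ ∀ k, x i0 ≤ x k := by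
  simp only [Set.mem_iInter, B, Set.mem_ofPred_eq]
  constructor
  · intro H
    exact ⟨(H i0 hi).1, fun i hI => le_antisymm ((H i hI).2 _) ((H i0 hi).2 _), (H i0 hi).2⟩
  · rintro ⟨h1, h2, h3⟩ i hI
    exact ⟨h1, fun k => (h2 i hI).trans_le (h3 k)⟩

include hi in
lemma N_pos {x} (hx : x ∈ (⋂ i ∈ I, B i)) : 0 < N I i0 x := by
  obtain ⟨h1, h2, h3⟩ := (memB I i0 hi).1 hx
  have hs : 0 ≤ ∑ j : {j // j ∉ I}, (x j - x i0) :=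
    Finset.sum_nonneg fun j _ => sub_nonneg.2 (h3 j)
  have ha := abs_nonneg (x i0)
  refine lt_of_le_of_ne (add_nonneg ha hs) fun h0 => ?_
  unfold N at h0
  have e1 : x i0 = 0 := abs_eq_zero.1 (by linarith)
  have e2 : ∑ j : {j // j ∉ I}, (x j - x i0) = 0 := by linarith
  rw [Finset.sum_eq_zero_iff_of_nonneg (fun j _ => sub_nonneg.2 (h3 _))] at e2
  have : x = 0 := by
    ext i
    by_cases hI : i ∈ I
    · simp [h2 i hI, e1]
    · have := e2 ⟨i, hI⟩ (Finset.mem_univ _)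
      simp only [e1] at this
      simpa using this
  rw [this] at h1
  simp at h1

include hi in
lemma yc_h {x} (hx : x ∈ (⋂ i ∈ I, B i)) (j) :
    yc j0 (h I i0 j0 x) j = (x j - x i0) / N I i0 x := by
  have hp := N_pos I i0 hi hx
  by_cases hj : j = j0
  · subst hj
    have h1 := yc_sum j (h I i0 j x)
    classical
    rw [← Finset.add_sum_erase _ _ (Finset.mem_univ j)] at h1
    have : ∑ k ∈ Finset.univ.erase j, yc j (h I i0 j x) k =
        ∑ k ∈ Finset.univ.erase j, (x k - x i0) / N I i0 x := by
      apply Finset.sum_congr rfl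
      intro k hk
      simp [yc, h, Finset.ne_of_mem_erase hk]
    rw [this, ← Finset.sum_div] at h1
    have h2 : |h I i0 j x j| = |x i0| / N I i0 x := by
      simp [h, abs_div, abs_of_pos hp]
    have h3 : N I i0 x = |x i0| + ((x j - x i0) + ∑ k ∈ Finset.univ.erase j, (x k - x i0)) := by
      rw [Finset.add_sum_erase _ (fun k : {j // j ∉ I} => x k - x i0) (Finset.mem_univ j)]; rfl
    rw [h2] at h1
    have h4 : |x i0| / N I i0 x + ((x j - x i0) / N I i0 x +
        (∑ k ∈ Finset.univ.erase j, (x k - x i0)) / N I i0 x) = 1 := by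
      rw [← add_div, ← add_div, ← h3, div_self hp.ne']
    linarith
  · simp [yc, h, hj]

include hi in
lemma g_h {x} (hx : x ∈ (⋂ i ∈ I, B i)) : g I j0 (h I i0 j0 x) = (N I i0 x)⁻¹ • x := by
  obtain ⟨h1, h2, h3⟩ := (memB I i0 hi).1 hx
  have e : h I i0 j0 x j0 = x i0 / N I i0 x := by simp [h]
  ext i
  simp only [g, yc_h I i0 hi j0 hx, e]
  split_ifs with hI
  · simp only [PiLp.smul_apply, smul_eq_mul]
    rw [h2 i hI]; ring
  · simp only [PiLp.smul_apply, smul_eq_mul]; ring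

include hi in
lemma main_homeo : Nonempty ((⋂ i ∈ I, B i : Set (EuclideanSpace ℝ (Fin n))) ≃ₜ C j0) := by
  refine ⟨⟨⟨fun x => ⟨h I i0 j0 x, fun j => ?_⟩,
    fun u => ⟨‖g I j0 u‖⁻¹ • g I j0 u, ?_⟩, ?_, ?_⟩, ?_, ?_⟩⟩
  · rw [yc_h I i0 hi j0 x.2]
    exact div_nonneg (sub_nonneg.2 (((memB I i0 hi).1 x.2).2.2 _)) (N_pos I i0 hi x.2).le
  · have hg := norm_pos_iff.2 (g_ne I i0 hi j0 u)
    rw [memB I i0 hi]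
    refine ⟨by rw [norm_smul, norm_inv, norm_norm, inv_mul_cancel₀ hg.ne'], fun i hI => ?_,
      fun k => ?_⟩
    · simp [g, hI, hi]
    · simp only [PiLp.smul_apply, smul_eq_mul]
      apply mul_le_mul_of_nonneg_left _ (inv_nonneg.2 hg.le)
      by_cases hk : k ∈ I
      · simp [g, hk, hi]
      · simpa [g, hk, hi] using u.2 ⟨k, hk⟩
  · intro x
    apply Subtype.ext
    have hp := N_pos I i0 hi x.2
    have h1 := ((memB I i0 hi).1 x.2).1
    simp only [g_h I i0 hi j0 x.2]
    rw [norm_smul, h1, norm_inv, Real.norm_eq_abs, abs_of_pos hp, mul_one, inv_inv, smul_smul,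
      mul_inv_cancel₀ hp.ne', one_smul]
  · intro u
    apply Subtype.ext
    have hg := norm_pos_iff.2 (g_ne I i0 hi j0 u)
    simp only [h_smul I i0 j0 _ (inv_pos.2 hg), h_g I i0 hi j0]
  · refine Continuous.subtype_mk ?_ _
    refine (PiLp.continuous_toLp 2 _).comp (continuous_pi fun j => ?_)
    have hN := N_cont I i0
    split_ifs
    · exact Continuous.div (by fun_prop) (by fun_prop) fun x => (N_pos I i0 hi x.2).ne'
    · exact Continuous.div (by fun_prop) (by fun_prop) fun x => (N_pos I i0 hi x.2).ne'
  · refine Continuous.subtype_mk ?_ _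
    have hgc : Continuous fun u : C j0 => g I j0 u := (g_cont I j0).comp continuous_subtype_val
    exact (hgc.norm.inv₀ fun u => norm_ne_zero_iff.2 (g_ne I i0 hi j0 u)).smul hgc

end GBD

/-- The sphere `S^{n-1}` admits a good ball decomposition into `n` closed pieces:
each intersection over a nonempty proper index set `I` is homeomorphic to the closed
unit ball of `ℝ^{n-|I|}`, and the intersection of all pieces is exactly two points. -/
theorem sphere_goodBallDecomposition (n : ℕ) (hn : 2 ≤ n) :
    ∃ B : Fin n → Set (EuclideanSpace ℝ (Fin n)),
      (∀ i, IsClosed (B i)) ∧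
      (⋃ i, B i) = Metric.sphere (0 : EuclideanSpace ℝ (Fin n)) 1 ∧
      (∀ I : Finset (Fin n), I.Nonempty → I ≠ Finset.univ →
        Nonempty ((⋂ i ∈ I, B i) ≃ₜ
          (Metric.closedBall (0 : EuclideanSpace ℝ (Fin (n - I.card))) 1))) ∧
      ∃ p q : EuclideanSpace ℝ (Fin n), p ≠ q ∧ (⋂ i, B i) = {p, q} := by
  have hn0 : 0 < n := by omega
  have hnr : (0:ℝ) < n := by exact_mod_cast hn0
  have i0 : Fin n := ⟨0, hn0⟩
  refine ⟨GBD.B, fun i => ?_, ?_, fun I hI hU => ?_, ?_⟩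
  · have : GBD.B i = {x : EuclideanSpace ℝ (Fin n) | ‖x‖ = 1} ∩ ⋂ k, {x | x i ≤ x k} := by
      ext; simp [GBD.B]
    rw [this]
    exact (isClosed_eq (by fun_prop) (by fun_prop)).inter
      (isClosed_iInter fun k => isClosed_le (by fun_prop) (by fun_prop))
  · ext x
    simp only [Set.mem_iUnion, GBD.B, Set.mem_ofPred_eq, mem_sphere_zero_iff_norm]
    constructor
    · rintro ⟨i, h, -⟩
      exact h
    · intro h
      have : Nonempty (Fin n) := ⟨i0⟩
      obtain ⟨i, hi⟩ := Finite.exists_min (fun i => x i)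
      exact ⟨i, h, hi⟩
  · obtain ⟨i1, hi1⟩ := hI
    obtain ⟨j, hj⟩ : ∃ j, j ∉ I := by
      by_contra hc
      push Not at hc
      exact hU (Finset.eq_univ_iff_forall.2 hc)
    obtain ⟨e1⟩ := GBD.main_homeo I i1 hi1 ⟨j, hj⟩
    obtain ⟨e2⟩ := GBD.C_homeo (⟨j, hj⟩ : {j // j ∉ I})
    obtain ⟨e3⟩ := GBD.ball_homeo (J := {j // j ∉ I}) (n - I.card) (by
      simp [Fintype.card_subtype_compl])
    exact ⟨(e1.trans e2).trans e3⟩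
  · let o : EuclideanSpace ℝ (Fin n) := WithLp.toLp 2 fun _ => 1
    have key : ∀ c : ℝ, ‖c • o‖ = |c| * √n := by
      intro c
      rw [norm_smul, EuclideanSpace.norm_eq]
      simp [o]
    have hs : 0 < √(n:ℝ) := Real.sqrt_pos.2 hnr
    refine ⟨(√n)⁻¹ • o, (-(√n)⁻¹) • o, ?_, ?_⟩
    · intro h
      have h1 := congrArg (fun x : EuclideanSpace ℝ (Fin n) => x i0) h
      simp only [PiLp.smul_apply, smul_eq_mul, o] at h1
      have := inv_pos.2 hs
      linarith
    · ext x
      simp only [Set.mem_iInter, GBD.B, Set.mem_ofPred_eq, Set.mem_insert_iff,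
        Set.mem_singleton_iff]
      constructor
      · intro H
        have hx : x = x i0 • o := by
          ext i
          simpa [o] using le_antisymm ((H i).2 i0) ((H i0).2 i)
        have h1 := (H i0).1
        rw [hx, key] at h1
        have h2 : |x i0| = (√n)⁻¹ := eq_inv_of_mul_eq_one_left h1
        rcases eq_or_eq_neg_of_abs_eq h2 with h3 | h3
        · left; rw [← h3]; exact hx
        · right; rw [← h3]; exact hx
      · have := inv_pos.2 hs
        rintro (rfl | rfl) i
        · refine ⟨?_, fun k => by simp [o]⟩
          rw [key, abs_of_pos this, inv_mul_cancel₀ hs.ne']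
        · refine ⟨?_, fun k => by simp [o]⟩
          rw [key, abs_neg, abs_of_pos this, inv_mul_cancel₀ hs.ne']
end

section
/- Let E be a real vector space, let v : Fin (n+1) → E be an affinely independent family of points, and let c = (n+1)⁻¹ • ∑_{j} v j be its centroid. For each i, let C_i = convexHull ℝ ({c} ∪ {v j : j ≠ i}). Then ⋃_{i} C_i = convexHull ℝ (Set.range v); that is, the cones from the barycenter over the facets of the simplex cover the whole simplex. -/
/-- The cones from the barycenter of a simplex over its facets cover the simplex:
if `v` is an affinely independent family of `n+1` points with centroid `c`, then the
union over `i` of the convex hulls of `{c} ∪ {v j : j ≠ i}` is the convex hull of the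
whole vertex set. -/
theorem iUnion_cones_eq_simplex {E : Type*} [AddCommGroup E] [Module ℝ E] {n : ℕ}
    (v : Fin (n + 1) → E) (hv : AffineIndependent ℝ v)
    (c : E) (hc : c = ((n : ℝ) + 1)⁻¹ • ∑ j, v j) :
    (⋃ i, convexHull ℝ (insert c (v '' {j | j ≠ i}))) = convexHull ℝ (Set.range v) := by
  have hn : (n : ℝ) + 1 ≠ 0 := by positivity
  apply Set.Subset.antisymm
  · refine Set.iUnion_subset fun i => convexHull_min ?_ (convex_convexHull ℝ _)
    rintro x (rfl | ⟨j, -, rfl⟩)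
    · rw [hc, Finset.smul_sum]
      refine (convex_convexHull ℝ _).sum_mem (fun j _ => by positivity) ?_
        (fun j _ => subset_convexHull ℝ _ ⟨j, rfl⟩)
      simp [hn]
    · exact subset_convexHull ℝ _ ⟨j, rfl⟩
  · have h1 : convexHull ℝ (Set.range v) ⊆
        (Fintype.linearCombination ℝ v) '' (stdSimplex ℝ (Fin (n + 1))) := by
      refine convexHull_min ?_ ((convex_stdSimplex ℝ _).linear_image _)
      rintro _ ⟨i, rfl⟩
      exact ⟨Pi.single i 1, single_mem_stdSimplex ℝ i, by simp⟩
    intro x hx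
    obtain ⟨w, ⟨hw0, hw1⟩, rfl⟩ := h1 hx
    obtain ⟨i, hi⟩ := Finite.exists_min w
    refine Set.mem_iUnion.2 ⟨i, ?_⟩
    have hcs : ((n : ℝ) + 1) • c = ∑ j, v j := by rw [hc, smul_inv_smul₀ hn]
    have key : Fintype.linearCombination ℝ v w =
        ∑ j, (w j - w i + if j = i then ((n : ℝ) + 1) * w i else 0) •
          (if j = i then c else v j) := by
      have h2 : ∀ j, (w j - w i + if j = i then ((n : ℝ) + 1) * w i else 0) •
          (if j = i then c else v j) =
          w j • v j - w i • v j + if j = i then w i • ((n : ℝ) + 1) • c else 0 := by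
        intro j
        by_cases h : j = i
        · subst h
          simp [smul_smul, mul_comm]
        · simp [h, sub_smul]
      rw [Finset.sum_congr rfl fun j _ => h2 j, Finset.sum_add_distrib,
        Finset.sum_sub_distrib, ← Finset.smul_sum, hcs]
      simp [Fintype.linearCombination_apply]
    rw [key]
    refine (convex_convexHull ℝ _).sum_mem (fun j _ => ?_) ?_
        (fun j _ => subset_convexHull ℝ _ ?_)
    · have := hi j
      have := hw0 i
      split_ifs
      · have : 0 ≤ ((n : ℝ) + 1) * w i := by positivity
        linarith
      · linarith
    · rw [Finset.sum_add_distrib, Finset.sum_sub_distrib, hw1]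
      simp
    · by_cases h : j = i
      · simp [h]
      · rw [if_neg h]
        exact Or.inr ⟨j, h, rfl⟩
end

section
/- Let E be a real vector space, let v : Fin (n+1) → E be an affinely independent family of points, and let c = (n+1)⁻¹ • ∑_{j} v j be its centroid. For each i, let C_i = convexHull ℝ ({c} ∪ {v j : j ≠ i}). Then for every nonempty subset I ⊆ Fin (n+1): ⋂_{i∈I} C_i = convexHull ℝ ({c} ∪ {v j : j ∉ I}). In particular, when I = Fin (n+1), the intersection of all the cones is the single point {c}. -/
lemma mem_cone_iff_aux {E : Type*} [AddCommGroup E] [Module ℝ E] {n : ℕ}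
    (v : Fin (n + 1) → E) (c x : E) (S : Set (Fin (n + 1))) :
    x ∈ convexHull ℝ (insert c (v '' S)) ↔
      ∃ (a : ℝ) (w : Fin (n + 1) → ℝ), 0 ≤ a ∧ (∀ j, 0 ≤ w j) ∧ (∀ j, j ∉ S → w j = 0) ∧
        a + ∑ j, w j = 1 ∧ x = a • c + ∑ j, w j • v j := by
  classical
  constructor
  · intro hx
    let T : Set E := {x | ∃ (a : ℝ) (w : Fin (n + 1) → ℝ), 0 ≤ a ∧ (∀ j, 0 ≤ w j) ∧
        (∀ j, j ∉ S → w j = 0) ∧ a + ∑ j, w j = 1 ∧ x = a • c + ∑ j, w j • v j}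
    have hT : Convex ℝ T := by
      rintro x ⟨a, w, ha, hw, hS, h1, rfl⟩ y ⟨b, u, hb, hu, hS', h1', rfl⟩ s t hs ht hst
      refine ⟨s * a + t * b, fun j => s * w j + t * u j, by positivity, fun j => ?_,
        fun j hj => ?_, ?_, ?_⟩
      · have := hw j
        have := hu j
        positivity
      · simp [hS j hj, hS' j hj]
      · rw [Finset.sum_add_distrib, ← Finset.mul_sum, ← Finset.mul_sum]
        linear_combination s * h1 + t * h1' + hst
      · simp only [add_smul, Finset.sum_add_distrib, mul_smul, ← Finset.smul_sum, smul_add]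
        abel
    refine convexHull_min (t := T) ?_ hT hx
    rintro y (rfl | ⟨j, hj, rfl⟩)
    · exact ⟨1, 0, by simp⟩
    · refine ⟨0, Pi.single j 1, le_rfl, fun k => ?_, fun k hk => ?_, ?_, ?_⟩
      · by_cases h : k = j
        · subst h; simp
        · simp [h]
      · have h : k ≠ j := fun h => hk (h ▸ hj)
        simp [h]
      · simp
      · simp [Pi.single_apply]
  · rintro ⟨a, w, ha, hw, hS, h1, rfl⟩
    have key := (convex_convexHull ℝ (insert c (v '' S))).sum_mem (t := Finset.univ)
      (w := fun o : Option (Fin (n + 1)) => o.elim a w)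
      (z := fun o => o.elim c (fun j => if j ∈ S then v j else c))
      (by rintro (_ | j) -
          · exact ha
          · exact hw j)
      (by simpa [Fintype.sum_option] using h1)
      (by rintro (_ | j) -
          · exact subset_convexHull _ _ (by simp)
          · apply subset_convexHull
            by_cases h : j ∈ S
            · simpa [h] using Or.inr ⟨j, h, rfl⟩
            · simp [h])
    rw [Fintype.sum_option] at key
    simp only [Option.elim] at key
    convert key using 2
    refine Finset.sum_congr rfl fun j _ => ?_
    by_cases h : j ∈ S
    · simp [h]
    · simp [h, hS j h]

/-- Intersection pattern of the cones from the barycenter of a simplex over its facets: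
for every nonempty index set `I`, the intersection of the cones `C i`, `i ∈ I`, is the
cone from the barycenter over the face spanned by the vertices not in `I`; in particular
the intersection of all the cones is the single point `{c}`. -/
theorem iInter_cones_eq_cone_over_face {E : Type*} [AddCommGroup E] [Module ℝ E] {n : ℕ}
    (v : Fin (n + 1) → E) (hv : AffineIndependent ℝ v)
    (c : E) (hc : c = ((n : ℝ) + 1)⁻¹ • ∑ j, v j) :
    (∀ I : Finset (Fin (n + 1)), I.Nonempty →
      (⋂ i ∈ I, convexHull ℝ (insert c (v '' {j | j ≠ i}))) =
        convexHull ℝ (insert c (v '' {j | j ∉ I}))) ∧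
    (⋂ i, convexHull ℝ (insert c (v '' {j | j ≠ i}))) = {c} := by
  have main : ∀ I : Finset (Fin (n + 1)), I.Nonempty →
      (⋂ i ∈ I, convexHull ℝ (insert c (v '' {j | j ≠ i}))) =
        convexHull ℝ (insert c (v '' {j | j ∉ I})) := by
    rintro I ⟨i₀, hi₀⟩
    have hn : (0 : ℝ) < ((n : ℝ) + 1)⁻¹ := by positivity
    have hn1 : ((n : ℝ) + 1) * ((n : ℝ) + 1)⁻¹ = 1 := by field_simp
    have huniq : ∀ (a b : ℝ) (w u : Fin (n + 1) → ℝ), a + ∑ j, w j = 1 → b + ∑ j, u j = 1 →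
        a • c + ∑ j, w j • v j = b • c + ∑ j, u j • v j →
        ∀ j, a * ((n : ℝ) + 1)⁻¹ + w j = b * ((n : ℝ) + 1)⁻¹ + u j := by
      intro a b w u hw hu h j
      have := (affineIndependent_iff.1 hv) Finset.univ
        (fun j => (a * ((n : ℝ) + 1)⁻¹ + w j) - (b * ((n : ℝ) + 1)⁻¹ + u j)) ?_ ?_ j
        (Finset.mem_univ j)
      · linarith
      · simp only [Finset.sum_sub_distrib, Finset.sum_add_distrib, Finset.sum_const,
          Finset.card_univ, Fintype.card_fin, nsmul_eq_mul]
        push_cast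
        linear_combination (a - b) * hn1 + hw - hu
      · simp only [sub_smul, add_smul, Finset.sum_sub_distrib, Finset.sum_add_distrib, mul_smul,
          ← Finset.smul_sum]
        rw [← hc, h, sub_self]
    apply Set.Subset.antisymm
    · intro x hx
      simp only [Set.mem_iInter] at hx
      obtain ⟨a, w, ha, hw, hS, h1, hxe⟩ := (mem_cone_iff_aux v c x _).1 (hx i₀ hi₀)
      refine (mem_cone_iff_aux v c x _).2 ⟨a, w, ha, hw, fun k hk => ?_, h1, hxe⟩
      have hk' : k ∈ I := by simpa using hk
      obtain ⟨b, u, hb, hu, hS', h1', hxe'⟩ := (mem_cone_iff_aux v c x _).1 (hx k hk')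
      have e := huniq a b w u h1 h1' (hxe.symm.trans hxe')
      have e1 := e k
      have e2 := e i₀
      rw [hS' k (by simp)] at e1
      rw [hS i₀ (by simp)] at e2
      linarith [hw k, hu i₀]
    · refine Set.subset_iInter₂ fun i hi => convexHull_mono ?_
      refine Set.insert_subset_insert (Set.image_mono ?_)
      rintro j hj rfl
      exact hj hi
  refine ⟨main, ?_⟩
  have := main Finset.univ Finset.univ_nonempty
  simpa using this
end

section
/- Let E be a real vector space, let v : Fin (n+1) → E be an affinely independent family of points, and let c = (n+1)⁻¹ • ∑_{j} v j be its centroid. Then for each index i, the cone C_i = convexHull ℝ ({c} ∪ {v j : j ≠ i}) equals the set of points of the simplex whose i-th barycentric coordinate is minimal: C_i = { ∑_j t_j • v j : t_j ≥ 0 for all j, ∑_j t_j = 1, and t_i ≤ t_j for all j }. -/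
/-- Barycentric characterization of the cone from the barycenter over a facet:
the convex hull of `{c} ∪ {v j : j ≠ i}`, where `c` is the centroid of an affinely
independent family `v`, is exactly the set of points of the simplex whose `i`-th
barycentric coordinate is minimal. -/
theorem cone_eq_minimal_barycentric {E : Type*} [AddCommGroup E] [Module ℝ E] {n : ℕ}
    (v : Fin (n + 1) → E) (hv : AffineIndependent ℝ v)
    (c : E) (hc : c = ((n : ℝ) + 1)⁻¹ • ∑ j, v j) (i : Fin (n + 1)) :
    convexHull ℝ (insert c (v '' {j | j ≠ i})) =
      {x : E | ∃ t : Fin (n + 1) → ℝ, (∀ j, 0 ≤ t j) ∧ (∑ j, t j) = 1 ∧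
        (∀ j, t i ≤ t j) ∧ x = ∑ j, t j • v j} := by
  have hn : ((n : ℝ) + 1) ≠ 0 := by positivity
  have hcs : ((n : ℝ) + 1) • c = ∑ j, v j := by
    rw [hc, smul_smul, mul_inv_cancel₀ hn, one_smul]
  apply Set.Subset.antisymm
  · apply convexHull_min
    · rintro x (rfl | ⟨k, hk, rfl⟩)
      · refine ⟨fun _ => ((n : ℝ) + 1)⁻¹, fun _ => by positivity, ?_, fun _ => le_rfl, ?_⟩
        · simp [hn]
        · rw [hc, Finset.smul_sum]
      · refine ⟨fun j => if j = k then 1 else 0, ?_, ?_, ?_, ?_⟩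
        · intro j
          dsimp only
          split_ifs <;> norm_num
        · simp
        · intro j
          have hik : i ≠ k := fun h => hk h.symm
          simp only [if_neg hik]
          split_ifs <;> norm_num
        · simp
    · rintro x ⟨t, ht0, ht1, hti, rfl⟩ y ⟨s, hs0, hs1, hsi, rfl⟩ a b ha hb hab
      refine ⟨fun j => a * t j + b * s j, ?_, ?_, ?_, ?_⟩
      · intro j
        have := mul_nonneg ha (ht0 j)
        have := mul_nonneg hb (hs0 j)
        dsimp only
        linarith
      · rw [Finset.sum_add_distrib, ← Finset.mul_sum, ← Finset.mul_sum, ht1, hs1]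
        linarith
      · intro j
        have := mul_le_mul_of_nonneg_left (hti j) ha
        have := mul_le_mul_of_nonneg_left (hsi j) hb
        dsimp only
        linarith
      · simp only [Finset.smul_sum, add_smul, mul_smul, Finset.sum_add_distrib]
  · rintro x ⟨t, ht0, ht1, hti, rfl⟩
    have key : ∑ j, t j • v j =
        ∑ j, ((t j - t i) + if j = i then ((n : ℝ) + 1) * t i else 0) •
          (if j = i then c else v j) := by
      have h : ∀ j, ((t j - t i) + if j = i then ((n : ℝ) + 1) * t i else 0) •
          (if j = i then c else v j) =
          (t j • v j - t i • v j) + if j = i then t i • ∑ k, v k else 0 := by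
        intro j
        by_cases hj : j = i
        · subst hj
          simp only [if_true, sub_self, zero_add]
          rw [← hcs, smul_smul, mul_comm]
        · simp [hj, sub_smul]
      rw [Finset.sum_congr rfl fun j _ => h j, Finset.sum_add_distrib,
        Finset.sum_sub_distrib, ← Finset.smul_sum]
      simp
    rw [key]
    apply (convex_convexHull ℝ _).sum_mem
    · intro j _
      have h1 := hti j
      have h2 : 0 ≤ ((n : ℝ) + 1) * t i := mul_nonneg (by positivity) (ht0 i)
      split_ifs <;> linarith
    · rw [Finset.sum_add_distrib, Finset.sum_sub_distrib, ht1]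
      simp
    · intro j _
      apply subset_convexHull
      by_cases hj : j = i
      · simp [hj]
      · rw [if_neg hj]
        exact Set.mem_insert_of_mem _ ⟨j, hj, rfl⟩
end

section
/- Let n ≥ 2, let S be a topological space, let D : Fin n → Set S be a family of pairwise disjoint closed subsets of S, let M be a type and M_• : Fin n → Set M an arbitrary family of subsets. For each i ∈ Fin n (with indices taken modulo n, i.e. using addition in Fin n) define W_i = (M_i ×ˢ closure (S \ D i)) ∪ (M_{i+1} ×ˢ D_{i+1}) ⊆ M × S. Then for every nonempty subset I ⊆ Fin n: ⋂_{i∈I} W_i equals the union of the following three sets: (1) (⋂_{i∈I} M_i) ×ˢ closure (S \ ⋃_{i∈I} D i); (2) ⋃ over those i ∈ I with i+1 ∉ I of ((⋂_{j ∈ (I \ {i}) ∪ {i+1}} M_j) ×ˢ D_{i+1}); (3) ⋃ over those i ∈ I with i+1 ∈ I of ((⋂_{j ∈ I \ {i}} M_j) ×ˢ frontier (D_{i+1})). -/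
open scoped Function

/-- The key set-theoretic identity in the proof that every surface bundle admits a
multisection. With `W i = (M i ×ˢ closure (S \ D i)) ∪ (M (i+1) ×ˢ D (i+1))`
(indices modulo `n`), the intersection of the `W i` over a nonempty index set `I`
decomposes into the three pieces described in the paper. -/
theorem iInter_multisection_pieces {S : Type*} [TopologicalSpace S] {M : Type*}
    (n : ℕ) (hn : 2 ≤ n) [NeZero n]
    (D : Fin n → Set S) (hDclosed : ∀ i, IsClosed (D i))
    (hDdisj : Pairwise (Disjoint on D))
    (Mf : Fin n → Set M)
    (W : Fin n → Set (M × S))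
    (hW : ∀ i, W i = (Mf i ×ˢ closure ((D i)ᶜ)) ∪ (Mf (i + 1) ×ˢ D (i + 1)))
    (I : Set (Fin n)) (hI : I.Nonempty) :
    (⋂ i ∈ I, W i) =
      ((⋂ i ∈ I, Mf i) ×ˢ closure ((⋃ i ∈ I, D i)ᶜ)) ∪
      (⋃ i ∈ {i ∈ I | i + 1 ∉ I},
        (⋂ j ∈ (I \ {i}) ∪ {i + 1}, Mf j) ×ˢ D (i + 1)) ∪
      (⋃ i ∈ {i ∈ I | i + 1 ∈ I},
        (⋂ j ∈ I \ {i}, Mf j) ×ˢ frontier (D (i + 1))) := by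
  have hsucc : ∀ i : Fin n, i + 1 ≠ i := by
    intro i h
    have h1 : (1 : Fin n) = 0 := by simpa using h
    have h2 := congrArg Fin.val h1
    rw [Fin.val_one', Fin.val_zero, Nat.mod_eq_of_lt (by omega)] at h2
    omega
  have huniq : ∀ s i j, s ∈ D i → s ∈ D j → i = j := by
    intro s i j hi hj
    by_contra h
    exact Set.disjoint_left.mp (hDdisj h) hi hj
  have hint : ∀ i s, s ∈ interior (D i) → s ∈ D i := fun i s h => interior_subset h
  have hU : ∀ s, s ∈ closure ((⋃ i ∈ I, D i)ᶜ) ↔ ∀ i ∈ I, s ∉ interior (D i) := by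
    intro s
    rw [closure_compl, Set.mem_compl_iff]
    constructor
    · intro h i hi hs
      exact h (interior_mono (Set.subset_biUnion_of_mem hi) hs)
    · intro h hs
      obtain ⟨k, hk, hsk⟩ := Set.mem_iUnion₂.mp (interior_subset hs)
      apply h k hk
      have hcl : IsClosed (⋃ i ∈ {i | i ≠ k}, D i) :=
        (Set.toFinite _).isClosed_biUnion (fun i _ => hDclosed i)
      rw [mem_interior]
      refine ⟨interior (⋃ i ∈ I, D i) ∩ (⋃ i ∈ {i | i ≠ k}, D i)ᶜ, ?_,
        isOpen_interior.inter hcl.isOpen_compl, hs, ?_⟩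
      · rintro t ⟨ht, ht'⟩
        obtain ⟨j, hj, htj⟩ := Set.mem_iUnion₂.mp (interior_subset ht)
        by_cases hjk : j = k
        · exact hjk ▸ htj
        · exact absurd (Set.mem_iUnion₂.mpr ⟨j, hjk, htj⟩) ht'
      · intro h'
        obtain ⟨j, hj, hsj⟩ := Set.mem_iUnion₂.mp h'
        exact hj (huniq s j k hsj hsk)
  have hinj : ∀ i j : Fin n, i + 1 = j + 1 → i = j := fun i j h => add_right_cancel h
  simp only [closure_compl, Set.mem_compl_iff] at hU
  ext ⟨m, s⟩
  simp only [Set.mem_iInter, hW, Set.mem_union, Set.mem_prod, hU, Set.mem_iUnion,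
    Set.mem_ofPred_eq, closure_compl, Set.mem_compl_iff, (hDclosed _).frontier_eq, Set.mem_sdiff,
    Set.mem_singleton_iff, exists_prop]
  constructor
  · intro h
    by_cases hall : ∀ i ∈ I, m ∈ Mf i ∧ s ∉ interior (D i)
    · exact Or.inl (Or.inl ⟨fun i hi => (hall i hi).1, fun i hi => (hall i hi).2⟩)
    · push Not at hall
      obtain ⟨p, hp, hpn⟩ := hall
      have hpp : m ∈ Mf (p + 1) ∧ s ∈ D (p + 1) := by
        rcases h p hp with h1 | h1
        · exact absurd (hpn h1.1) h1.2
        · exact h1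
      have hoth : ∀ j ∈ I, j ≠ p → m ∈ Mf j ∧ s ∉ interior (D j) := by
        intro j hj hjp
        rcases h j hj with h1 | h1
        · exact h1
        · exact absurd (hinj _ _ (huniq s _ _ h1.2 hpp.2)) hjp
      by_cases hk : p + 1 ∈ I
      · exact Or.inr ⟨p, ⟨hp, hk⟩, fun j hj => (hoth j hj.1 hj.2).1, hpp.2,
          (hoth _ hk (hsucc p)).2⟩
      · refine Or.inl (Or.inr ⟨p, ⟨hp, hk⟩, ?_, hpp.2⟩)
        rintro j (hj | rfl)
        · exact (hoth j hj.1 hj.2).1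
        · exact hpp.1
  · rintro ((⟨h1, h2⟩ | ⟨p, ⟨hp, hk⟩, h1, h2⟩) | ⟨p, ⟨hp, hk⟩, h1, h2, h3⟩) i hi
    · exact Or.inl ⟨h1 i hi, h2 i hi⟩
    · by_cases hip : i = p
      · subst hip
        exact Or.inr ⟨h1 _ (Or.inr rfl), h2⟩
      · refine Or.inl ⟨h1 i (Or.inl ⟨hi, hip⟩), fun hs => hk ?_⟩
        exact huniq s _ _ (hint _ _ hs) h2 ▸ hi
    · by_cases hip : i = p
      · subst hip
        exact Or.inr ⟨h1 _ ⟨hk, hsucc i⟩, h2⟩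
      · refine Or.inl ⟨h1 i ⟨hi, hip⟩, fun hs => h3 ?_⟩
        exact huniq s _ _ (hint _ _ hs) h2 ▸ hs
end
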